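/- Fix natural numbers g, n with 2g + n > 0. The contraction map is a well-defined bijection from the set of stable rooted trees T in SRT_{g,n,2} whose root vertex v_r has genus g(v_r) = 0 and exactly one positive half-edge, this positive half-edge being an edge (not a regular leg), onto the set of stable rooted trees T' in SRT_{g,n,2} whose root vertex satisfies 2 g(v_r) − 2 + |H_+(v_r)| ≥ 0. -/

import Mathlib

/-- A raw combinatorial rooted tree with genus labels and `n` labeled regular legs.
Vertices are `0, 1, …, numV − 1` with root `0`; `parent v < v` (for valid trees)
encodes the rooted tree structure; `genus v` is the genus label of vertex `v`;
`legAt i` is the vertex carrying the regular leg `i`.  The `m` frozen legs are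
always attached to the root and enter only through the stability condition. -/
structure RawTree (n : ℕ) where
  numV : ℕ
  parent : ℕ → ℕ
  genus : ℕ → ℕ
  legAt : Fin n → ℕ

namespace RawTree

variable {n : ℕ}

/-- The set of children of the vertex `v` (edge-ends at `v` directed away from
the root correspond to the children of `v`). -/
def children (T : RawTree n) (v : ℕ) : Finset ℕ :=
  (Finset.range T.numV).filter (fun w => T.parent w = v ∧ w ≠ v)

/-- The set of regular legs attached to the vertex `v`. -/
def legsAt (T : RawTree n) (v : ℕ) : Finset (Fin n) :=
  Finset.univ.filter (fun i => T.legAt i = v)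

/-- `T` is a stable rooted tree of type `(g, n, m)`: it is a genuine rooted tree
with root `0`, all legs attached to actual vertices, total genus `g`, and every
vertex `v` satisfies the stability condition `2 g(v) − 2 + |H(v)| > 0`, where
`|H(v)| = |children| + |regular legs at v| + (m if v is the root, else 1)`. -/
def IsSRT (g n m : ℕ) (T : RawTree n) : Prop :=
  0 < T.numV ∧
  T.parent 0 = 0 ∧
  (∀ v, 0 < v → v < T.numV → T.parent v < v) ∧
  (∀ i, T.legAt i < T.numV) ∧
  (∑ v ∈ Finset.range T.numV, T.genus v) = g ∧
  (∀ v, v < T.numV →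
    2 < 2 * T.genus v +
      ((T.children v).card + (T.legsAt v).card + (if v = 0 then m else 1)))

/-- Isomorphism of raw trees: a bijection of the vertex sets preserving the root,
the tree structure, the genus labels and the leg labels. -/
def Iso (T T' : RawTree n) : Prop :=
  ∃ σ : ℕ → ℕ,
    Set.BijOn σ (Set.Iio T.numV) (Set.Iio T'.numV) ∧
    σ 0 = 0 ∧
    (∀ v < T.numV, σ (T.parent v) = T'.parent (σ v)) ∧
    (∀ v < T.numV, T'.genus (σ v) = T.genus v) ∧
    (∀ i, σ (T.legAt i) = T'.legAt i)

/-- The root of `T` has genus `0` and its unique positive half-edge is an edge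
(exactly one child and no regular legs at the root). -/
def RootContractible (T : RawTree n) : Prop :=
  T.genus 0 = 0 ∧ (T.children 0).card = 1 ∧ (T.legsAt 0).card = 0

/-- The root of `T` satisfies `2 g(v_r) − 2 + |H_+(v_r)| ≥ 0`. -/
def RootStablePlus (T : RawTree n) : Prop :=
  2 ≤ 2 * T.genus 0 + ((T.children 0).card + (T.legsAt 0).card)

/-- Contraction of a tree whose root has genus `0` and a unique positive
half-edge which is an edge: delete the root and this edge, declare the unique
child (which is the vertex `1`) to be the new root, and reattach the frozen legs
to it. -/
def contract (T : RawTree n) : RawTree n where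
  numV := T.numV - 1
  parent := fun v => T.parent (v + 1) - 1
  genus := fun v => T.genus (v + 1)
  legAt := fun i => T.legAt i - 1

end RawTree

/-- Representatives of stable rooted trees of type `(g, n, m)`. -/
def SRTRep (g n m : ℕ) : Type :=
  {T : RawTree n // RawTree.IsSRT g n m T}

/-- The isomorphism relation on representatives. -/
def SRTRel (g n m : ℕ) (S S' : SRTRep g n m) : Prop :=
  RawTree.Iso S.1 S'.1

/-- `SRT g n m`: the set of isomorphism classes of stable rooted trees of type
`(g, n, m)`. -/
def SRT (g n m : ℕ) : Type :=
  Quot (SRTRel g n m)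

namespace RawTree

variable {n : ℕ}

theorem mem_children (T : RawTree n) (v w : ℕ) :
    w ∈ T.children v ↔ w < T.numV ∧ T.parent w = v ∧ w ≠ v := by
  simp [children]

theorem mem_legsAt (T : RawTree n) (v : ℕ) (i : Fin n) :
    i ∈ T.legsAt v ↔ T.legAt i = v := by
  simp [legsAt]

theorem IsSRT.parent_lt {g m : ℕ} {T : RawTree n} (hT : IsSRT g n m T) {v : ℕ}
    (hv : v < T.numV) : T.parent v < T.numV := by
  obtain ⟨h0, h1, h2, -⟩ := hT
  rcases Nat.eq_zero_or_pos v with rfl | hp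
  · omega
  · have := h2 v hp hv
    omega

theorem Iso.refl (T : RawTree n) : Iso T T :=
  ⟨id, Set.bijOn_id _, rfl, fun _ _ => rfl, fun _ _ => rfl, fun _ => rfl⟩

theorem Iso.trans {T T' T'' : RawTree n}
    (h : Iso T T') (h' : Iso T' T'') : Iso T T'' := by
  obtain ⟨σ, hb, h0, hp, hg, hl⟩ := h
  obtain ⟨τ, hb', h0', hp', hg', hl'⟩ := h'
  have hm : ∀ v < T.numV, σ v < T'.numV := fun v hv => hb.mapsTo hv
  refine ⟨τ ∘ σ, hb'.comp hb, by simp [h0, h0'], ?_, ?_, ?_⟩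
  · intro v hv
    simp only [Function.comp]
    rw [hp v hv, hp' _ (hm v hv)]
  · intro v hv
    simp only [Function.comp]
    rw [hg' _ (hm v hv), hg v hv]
  · intro i
    simp only [Function.comp]
    rw [hl, hl']

theorem Iso.symm {g m : ℕ} {T T' : RawTree n} (hT : IsSRT g n m T)
    (h : Iso T T') : Iso T' T := by
  obtain ⟨σ, hb, h0, hp, hg, hl⟩ := h
  have hinv := hb.invOn_invFunOn
  have hl1 : ∀ v < T.numV, Function.invFunOn σ (Set.Iio T.numV) (σ v) = v :=
    fun v hv => hinv.1 hv
  refine ⟨Function.invFunOn σ (Set.Iio T.numV), hb.symm hinv.symm, ?_, ?_, ?_, ?_⟩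
  · have := hl1 0 hT.1
    rwa [h0] at this
  · intro w hw
    obtain ⟨v, hv, rfl⟩ := hb.surjOn hw
    rw [← hp v hv, hl1 v hv, hl1 _ (hT.parent_lt hv)]
  · intro w hw
    obtain ⟨v, hv, rfl⟩ := hb.surjOn hw
    rw [hl1 v hv, hg v hv]
  · intro i
    rw [← hl i, hl1 _ (hT.2.2.2.1 i)]

/-- Facts about a contractible tree. -/
theorem contractible_facts {g m : ℕ} {T : RawTree n} (hT : IsSRT g n m T)
    (hc : RootContractible T) :
    1 < T.numV ∧ T.parent 1 = 0 ∧ (∀ v, 1 < v → v < T.numV → 0 < T.parent v) ∧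
      (∀ i, 0 < T.legAt i) := by
  obtain ⟨h0, h1, h2, -⟩ := hT
  obtain ⟨-, hc1, hc2⟩ := hc
  obtain ⟨a, ha⟩ := Finset.card_eq_one.1 hc1
  have hmem : ∀ w, (w < T.numV ∧ T.parent w = 0 ∧ w ≠ 0) ↔ w = a := by
    intro w
    have : w ∈ T.children 0 ↔ w = a := by rw [ha]; simp
    simpa [children] using this
  have haa := (hmem a).2 rfl
  have hn : 1 < T.numV := by omega
  have hp1 : T.parent 1 = 0 := by
    have := h2 1 (by omega) hn
    omega
  have h1a := (hmem 1).1 ⟨hn, hp1, by omega⟩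
  refine ⟨hn, hp1, ?_, ?_⟩
  · intro v hv hvn
    by_contra hcon
    have := (hmem v).1 ⟨hvn, by omega, by omega⟩
    omega
  · intro i
    by_contra hcon
    have hz := Finset.card_eq_zero.1 hc2
    have : i ∈ T.legsAt 0 := by
      simp only [legsAt, Finset.mem_filter, Finset.mem_univ, true_and]
      omega
    rw [hz] at this
    simp at this

theorem contract_children_card {g m : ℕ} {T : RawTree n} (hT : IsSRT g n m T)
    (hc : RootContractible T) (v : ℕ) :
    (T.contract.children v).card = (T.children (v + 1)).card := by
  obtain ⟨hn, hp1, hp, hl⟩ := contractible_facts hT hc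
  have h0 := hT.2.1
  have : T.children (v + 1) = (T.contract.children v).map (addRightEmbedding 1) := by
    ext w
    simp only [mem_children, contract, Finset.mem_map,
      addRightEmbedding_apply]
    constructor
    · rintro ⟨a, b, c⟩
      rcases w with _ | w
      · omega
      · exact ⟨w, ⟨by omega, by omega, by omega⟩, rfl⟩
    · rintro ⟨w, ⟨a, b, c⟩, rfl⟩
      refine ⟨by omega, ?_, by omega⟩
      rcases Nat.eq_zero_or_pos w with rfl | hw
      · rw [Nat.zero_add, hp1] at b
        omega
      · have := hp (w + 1) (by omega) (by omega)
        omega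
  rw [this, Finset.card_map]

theorem contract_legsAt {g m : ℕ} {T : RawTree n} (hT : IsSRT g n m T)
    (hc : RootContractible T) (v : ℕ) :
    T.contract.legsAt v = T.legsAt (v + 1) := by
  obtain ⟨hn, hp1, hp, hl⟩ := contractible_facts hT hc
  ext i
  have := hl i
  simp only [mem_legsAt, contract]
  omega

theorem contract_stablePlus {g m : ℕ} {T : RawTree n} (hT : IsSRT g n m T)
    (hc : RootContractible T) : RootStablePlus T.contract := by
  have hn := (contractible_facts hT hc).1
  have := hT.2.2.2.2.2 1 hn
  unfold RootStablePlus
  rw [contract_children_card hT hc, contract_legsAt hT hc]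
  simp only [contract, Nat.zero_add]
  simp at this
  omega

theorem contract_isSRT {g : ℕ} {T : RawTree n} (hT : IsSRT g n 2 T)
    (hc : RootContractible T) : IsSRT g n 2 T.contract := by
  obtain ⟨hn, hp1, hp, hl⟩ := contractible_facts hT hc
  have hsp := contract_stablePlus hT hc
  refine ⟨?_, ?_, ?_, ?_, ?_, ?_⟩
  · simp only [contract]; omega
  · simp [contract, hp1]
  · intro v hv hvn
    simp only [contract] at hvn ⊢
    have := hp (v + 1) (by omega) (by omega)
    have := hT.2.2.1 (v + 1) (by omega) (by omega)
    omega
  · intro i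
    have := hT.2.2.2.1 i
    simp only [contract]
    omega
  · have hs := hT.2.2.2.2.1
    obtain ⟨k, hk⟩ : ∃ k, T.numV = k + 1 := ⟨T.numV - 1, by omega⟩
    rw [hk, Finset.sum_range_succ', hc.1] at hs
    simpa [contract, hk] using hs
  · intro v hv
    rcases Nat.eq_zero_or_pos v with rfl | hv0
    · unfold RootStablePlus at hsp
      simp only [if_true]
      omega
    · rw [contract_children_card hT hc, contract_legsAt hT hc]
      have := hT.2.2.2.2.2 (v + 1) (by simp only [contract] at hv; omega)
      rw [if_neg (by omega)] at this ⊢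
      simpa [contract] using this

theorem contract_iso {g m : ℕ} {T T' : RawTree n} (hT : IsSRT g n m T)
    (hc : RootContractible T) (hT' : IsSRT g n m T') (hc' : RootContractible T')
    (h : Iso T T') : Iso T.contract T'.contract := by
  obtain ⟨hn, hp1, hp, hl⟩ := contractible_facts hT hc
  obtain ⟨hn', hp1', hp', hl'⟩ := contractible_facts hT' hc'
  obtain ⟨σ, hb, h0, hsp, hg, hsl⟩ := h
  have hm : ∀ v < T.numV, σ v < T'.numV := fun v hv => hb.mapsTo hv
  have hinj : ∀ v < T.numV, ∀ w < T.numV, σ v = σ w → v = w :=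
    fun v hv w hw e => hb.injOn hv hw e
  have hpos : ∀ v < T.numV, 0 < v → 0 < σ v := by
    intro v hv hv0
    by_contra hcon
    have := hinj v hv 0 (by omega) (by omega)
    omega
  have hs1 : σ 1 = 1 := by
    have a := hsp 1 hn
    rw [hp1, h0] at a
    have b := hm 1 hn
    have c := hpos 1 hn (by omega)
    by_contra hcon
    have := hp' (σ 1) (by omega) b
    omega
  refine ⟨fun v => σ (v + 1) - 1, ⟨?_, ?_, ?_⟩, by simp [hs1], ?_, ?_, ?_⟩
  · intro v hv
    simp only [contract, Set.mem_Iio] at hv ⊢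
    have := hm (v + 1) (by omega)
    have := hpos (v + 1) (by omega) (by omega)
    omega
  · intro v hv w hw e
    simp only [contract, Set.mem_Iio] at hv hw e
    have a := hpos (v + 1) (by omega) (by omega)
    have b := hpos (w + 1) (by omega) (by omega)
    have := hinj (v + 1) (by omega) (w + 1) (by omega) (by omega)
    omega
  · intro w hw
    simp only [contract, Set.mem_Iio] at hw
    obtain ⟨v, hv, hvw⟩ := hb.surjOn (show w + 1 ∈ Set.Iio T'.numV by
      simp only [Set.mem_Iio]; omega)
    simp only [Set.mem_Iio] at hv
    rcases v with _ | v
    · omega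
    · exact ⟨v, by simp only [contract, Set.mem_Iio]; omega, by simp only [hvw]; omega⟩
  · intro v hv
    simp only [contract] at hv ⊢
    have a := hpos (v + 1) (by omega) (by omega)
    rw [Nat.sub_add_cancel a, ← hsp (v + 1) (by omega)]
    rcases Nat.eq_zero_or_pos v with rfl | hv0
    · simp [hp1, h0, hs1]
    · rw [Nat.sub_add_cancel (hp (v + 1) (by omega) (by omega))]
  · intro v hv
    simp only [contract] at hv ⊢
    have a := hpos (v + 1) (by omega) (by omega)
    rw [Nat.sub_add_cancel a, hg (v + 1) (by omega)]
  · intro i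
    simp only [contract]
    rw [Nat.sub_add_cancel (hl i), hsl]

theorem iso_of_contract_iso {g m : ℕ} {T T' : RawTree n} (hT : IsSRT g n m T)
    (hc : RootContractible T) (hT' : IsSRT g n m T') (hc' : RootContractible T')
    (h : Iso T.contract T'.contract) : Iso T T' := by
  obtain ⟨hn, hp1, hp, hl⟩ := contractible_facts hT hc
  obtain ⟨hn', hp1', hp', hl'⟩ := contractible_facts hT' hc'
  obtain ⟨σ, hb, h0, hsp, hg, hsl⟩ := h
  have hm : ∀ v < T.numV - 1, σ v < T'.numV - 1 := fun v hv => hb.mapsTo hv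
  have hinj : ∀ v < T.numV - 1, ∀ w < T.numV - 1, σ v = σ w → v = w :=
    fun v hv w hw e => hb.injOn hv hw e
  simp only [contract] at hsp hg hsl
  let τ : ℕ → ℕ := fun v => if v = 0 then 0 else σ (v - 1) + 1
  have τ0 : τ 0 = 0 := rfl
  have τs : ∀ v, τ (v + 1) = σ v + 1 := fun v => by simp [τ]
  refine ⟨τ, ⟨?_, ?_, ?_⟩, τ0, ?_, ?_, ?_⟩
  · intro v hv
    simp only [Set.mem_Iio] at hv ⊢
    rcases v with _ | v
    · rw [τ0]; omega
    · have := hm v (by omega)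
      rw [τs]; omega
  · intro v hv w hw e
    simp only [Set.mem_Iio] at hv hw
    rcases v with _ | v <;> rcases w with _ | w
    · rfl
    · rw [τ0, τs] at e; omega
    · rw [τ0, τs] at e; omega
    · rw [τs, τs] at e
      rw [hinj v (by omega) w (by omega) (by omega)]
  · intro w hw
    simp only [Set.mem_Iio] at hw
    rcases w with _ | w
    · exact ⟨0, by simp only [Set.mem_Iio]; omega, τ0⟩
    · obtain ⟨v, hv, hvw⟩ := hb.surjOn (show w ∈ Set.Iio T'.contract.numV by
        simp only [contract, Set.mem_Iio]; omega)
      simp only [contract, Set.mem_Iio] at hv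
      exact ⟨v + 1, by simp only [Set.mem_Iio]; omega, by rw [τs, hvw]⟩
  · intro v hv
    rcases v with _ | _ | v
    · rw [hT.2.1, τ0, hT'.2.1]
    · rw [τs, h0, Nat.zero_add, hp1, hp1', τ0]
    · have a := hp (v + 2) (by omega) (by omega)
      have b := hsp (v + 1) (by omega)
      obtain ⟨k, hk⟩ : ∃ k, T.parent (v + 2) = k + 1 := ⟨T.parent (v + 2) - 1, by omega⟩
      have hs : σ (v + 1) ≠ 0 := by
        intro e
        have := hinj (v + 1) (by omega) 0 (by omega) (by rw [e, h0])
        omega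
      have c := hm (v + 1) (by omega)
      have d := hp' (σ (v + 1) + 1) (by omega) (by omega)
      rw [τs]
      change τ (T.parent (v + 2)) = _
      change σ (T.parent (v + 2) - 1) = _ at b
      rw [hk] at b ⊢
      rw [τs]
      simp only [Nat.add_sub_cancel] at b
      omega
  · intro v hv
    rcases v with _ | v
    · rw [τ0, hc.1, hc'.1]
    · rw [τs, hg v (by omega)]
  · intro i
    have a := hl i
    have b := hl' i
    have c := hsl i
    have : T.legAt i = (T.legAt i - 1) + 1 := by omega
    rw [this, τs, c]
    omega

/-- The inverse of contraction: graft a new genus-zero root below the old root. -/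
def expand (T : RawTree n) : RawTree n where
  numV := T.numV + 1
  parent := fun v => if v ≤ 1 then 0 else T.parent (v - 1) + 1
  genus := fun v => if v = 0 then 0 else T.genus (v - 1)
  legAt := fun i => T.legAt i + 1

theorem contract_expand {T : RawTree n} (h0 : T.parent 0 = 0) : T.expand.contract = T := by
  rcases T with ⟨N, p, ge, l⟩
  simp only at h0
  simp only [expand, contract, RawTree.mk.injEq]
  refine ⟨by omega, ?_, ?_, ?_⟩
  · funext v
    rcases v with _ | v
    · simp [h0]
    · simp
  · funext v; simp
  · funext i; simp

theorem expand_contractible {g m : ℕ} {T : RawTree n} (hT : IsSRT g n m T) :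
    RootContractible T.expand := by
  refine ⟨rfl, ?_, ?_⟩
  · rw [Finset.card_eq_one]
    refine ⟨1, ?_⟩
    ext w
    have := hT.1
    simp only [mem_children, expand, Finset.mem_singleton]
    constructor
    · rintro ⟨a, b, c⟩
      split_ifs at b <;> omega
    · rintro rfl
      simp [this]
  · rw [Finset.card_eq_zero]
    ext i
    simp [mem_legsAt, expand]

theorem expand_children_card {g m : ℕ} {T : RawTree n} (hT : IsSRT g n m T) (v : ℕ) :
    (T.expand.children (v + 1)).card = (T.children v).card := by
  have h0 := hT.2.1
  have : T.expand.children (v + 1) = (T.children v).map (addRightEmbedding 1) := by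
    ext w
    simp only [mem_children, expand, Finset.mem_map,
      addRightEmbedding_apply]
    constructor
    · rintro ⟨a, b, c⟩
      rcases w with _ | w
      · simp at b
      · refine ⟨w, ⟨by omega, ?_, by omega⟩, rfl⟩
        split_ifs at b
        simpa using b
    · rintro ⟨w, ⟨a, b, c⟩, rfl⟩
      refine ⟨by omega, ?_, by omega⟩
      rcases Nat.eq_zero_or_pos w with rfl | hw
      · omega
      · rw [if_neg (by omega)]
        simpa using b
  rw [this, Finset.card_map]

theorem expand_isSRT {g : ℕ} {T : RawTree n} (hT : IsSRT g n 2 T)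
    (hs : RootStablePlus T) : IsSRT g n 2 T.expand := by
  have hc := expand_contractible hT
  refine ⟨?_, ?_, ?_, ?_, ?_, ?_⟩
  · simp [expand]
  · simp [expand]
  · intro v hv hvn
    simp only [expand] at hvn ⊢
    split_ifs
    · omega
    · have := hT.2.2.1 (v - 1) (by omega) (by omega)
      omega
  · intro i
    have := hT.2.2.2.1 i
    simp only [expand]
    omega
  · have := hT.2.2.2.2.1
    simp only [expand]
    rw [Finset.sum_range_succ']
    simpa using this
  · intro v hv
    rcases v with _ | v
    · rw [hc.2.1]
      simp
      omega
    · have hl : T.expand.legsAt (v + 1) = T.legsAt v := by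
        ext i
        simp [mem_legsAt, expand]
      have hg : T.expand.genus (v + 1) = T.genus v := by simp [expand]
      rw [expand_children_card hT, hl, hg, if_neg (by omega)]
      rcases Nat.eq_zero_or_pos v with rfl | hv0
      · unfold RootStablePlus at hs
        omega
      · have := hT.2.2.2.2.2 v (by simp only [expand] at hv; omega)
        rwa [if_neg (by omega)] at this

end RawTree

theorem SRT_mk_eq_iff {g n m : ℕ} (S S' : SRTRep g n m) :
    Quot.mk (SRTRel g n m) S = Quot.mk (SRTRel g n m) S' ↔ RawTree.Iso S.1 S'.1 := by
  have he : Equivalence (SRTRel g n m) :=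
    ⟨fun S => RawTree.Iso.refl S.1, fun {S _} h => RawTree.Iso.symm S.2 h,
      fun h h' => RawTree.Iso.trans h h'⟩
  constructor
  · intro h
    exact he.quot_mk_eq_iff S S' |>.1 h
  · intro h
    exact Quot.sound h

/-- The contraction map is a well-defined bijection from the set of stable rooted
trees in `SRT_{g,n,2}` whose root has genus `0` and exactly one positive half-edge,
this half-edge being an edge, onto the set of stable rooted trees in `SRT_{g,n,2}`
whose root satisfies `2 g(v_r) − 2 + |H_+(v_r)| ≥ 0`. -/
theorem contraction_bijection (g n : ℕ) (h : 0 < 2 * g + n) :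
    ∃ F : {t : SRT g n 2 //
            ∃ S : SRTRep g n 2, Quot.mk (SRTRel g n 2) S = t ∧ RawTree.RootContractible S.1}
          → {t : SRT g n 2 //
            ∃ S : SRTRep g n 2, Quot.mk (SRTRel g n 2) S = t ∧ RawTree.RootStablePlus S.1},
      Function.Bijective F ∧
      ∀ (T : RawTree n) (hT : RawTree.IsSRT g n 2 T) (hc : RawTree.RootContractible T),
        ∃ hT' : RawTree.IsSRT g n 2 T.contract,
          (F ⟨Quot.mk (SRTRel g n 2) ⟨T, hT⟩, ⟨⟨T, hT⟩, rfl, hc⟩⟩).val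
            = Quot.mk (SRTRel g n 2) ⟨T.contract, hT'⟩ := by
  classical
  refine ⟨fun t => ⟨Quot.mk _ ⟨(Classical.choose t.2).1.contract,
      RawTree.contract_isSRT (Classical.choose t.2).2 (Classical.choose_spec t.2).2⟩,
      ⟨_, rfl, RawTree.contract_stablePlus (Classical.choose t.2).2
        (Classical.choose_spec t.2).2⟩⟩, ?_⟩
  have key : ∀ (T : RawTree n) (hT : RawTree.IsSRT g n 2 T) (hc : RawTree.RootContractible T)
      (t : {t : SRT g n 2 //
            ∃ S : SRTRep g n 2, Quot.mk (SRTRel g n 2) S = t ∧ RawTree.RootContractible S.1}),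
      t.1 = Quot.mk (SRTRel g n 2) ⟨T, hT⟩ →
      RawTree.Iso (Classical.choose t.2).1.contract T.contract := by
    intro T hT hc t ht
    have hs := Classical.choose_spec t.2
    exact RawTree.contract_iso (Classical.choose t.2).2 hs.2 hT hc
      ((SRT_mk_eq_iff _ ⟨T, hT⟩).1 (hs.1.trans ht))
  refine ⟨⟨?_, ?_⟩, ?_⟩
  · intro t t' e
    have e1 := (SRT_mk_eq_iff _ _).1 (congrArg Subtype.val e)
    have hs := Classical.choose_spec t.2
    have hs' := Classical.choose_spec t'.2
    have e2 := RawTree.iso_of_contract_iso (Classical.choose t.2).2 hs.2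
      (Classical.choose t'.2).2 hs'.2 e1
    exact Subtype.ext (hs.1.symm.trans (((SRT_mk_eq_iff _ _).2 e2).trans hs'.1))
  · rintro ⟨t, S, rfl, hS⟩
    have hE := RawTree.expand_isSRT S.2 hS
    have hC := RawTree.expand_contractible S.2
    refine ⟨⟨Quot.mk _ ⟨S.1.expand, hE⟩, ⟨_, rfl, hC⟩⟩, ?_⟩
    apply Subtype.ext
    refine (SRT_mk_eq_iff _ _).2 ?_
    have := key _ hE hC ⟨Quot.mk _ ⟨S.1.expand, hE⟩, ⟨_, rfl, hC⟩⟩ rfl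
    rwa [RawTree.contract_expand S.2.2.1] at this
  · intro T hT hc
    refine ⟨RawTree.contract_isSRT hT hc, ?_⟩
    exact (SRT_mk_eq_iff _ _).2 (key T hT hc _ rfl)
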